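/- Fix r ≥ 2 and 1 ≤ ℓ ≤ r-1 with ℓ odd, and let α = max{ℓ, r - (ℓ+1)/2}. Then ex_→(n, ord(I^r(ℓ))) = O(n^α): there is a constant C = C(r, ℓ) such that every ordered r-graph on [n] with more than C·n^α edges contains two edges e, f with |e ∩ f| = ℓ forming an interval r-partite configuration. -/

import Mathlib

/-- An interval in ℕ: a set of consecutive integers. -/
def IsIntervalN (I : Finset ℕ) : Prop := ∃ a b : ℕ, I = Finset.Icc a b

/-- Every element of `I` is smaller than every element of `J`. -/
def Precedes (I J : Finset ℕ) : Prop := ∀ x ∈ I, ∀ y ∈ J, x < y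

/-- An ordered hypergraph `H` is interval k-partite with parts of size at most `m`:
there are ℓ ≥ k disjoint intervals I₀ < I₁ < ⋯ < I_{ℓ-1}, each of size at most `m`,
such that every edge of `H` is contained in their union and intersects each of them. -/
def IntervalKPartiteB (k m : ℕ) (H : Finset (Finset ℕ)) : Prop :=
  ∃ ℓ, k ≤ ℓ ∧ ∃ I : ℕ → Finset ℕ,
    (∀ j < ℓ, IsIntervalN (I j)) ∧
    (∀ j < ℓ, (I j).card ≤ m) ∧
    (∀ j j', j < j' → j' < ℓ → Precedes (I j) (I j')) ∧
    ∀ e ∈ H, (∀ x ∈ e, ∃ j < ℓ, x ∈ I j) ∧ (∀ j < ℓ, (e ∩ I j).Nonempty)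

/-- An ordered hypergraph `H` is interval k-partite: there are ℓ ≥ k disjoint
intervals I₀ < I₁ < ⋯ < I_{ℓ-1} such that every edge of `H` is contained in
their union and intersects each of them. -/
def IntervalKPartite (k : ℕ) (H : Finset (Finset ℕ)) : Prop :=
  ∃ ℓ, k ≤ ℓ ∧ ∃ I : ℕ → Finset ℕ,
    (∀ j < ℓ, IsIntervalN (I j)) ∧
    (∀ j j', j < j' → j' < ℓ → Precedes (I j) (I j')) ∧
    ∀ e ∈ H, (∀ x ∈ e, ∃ j < ℓ, x ∈ I j) ∧ (∀ j < ℓ, (e ∩ I j).Nonempty)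

/-- An ordered hypergraph `H` is interval r-partite in the exact sense: there are
intervals I₀ < I₁ < ⋯ < I_{r-1} such that every edge of `H` has exactly one
vertex in each of them (and is contained in their union). -/
def IntervalPartiteExact (r : ℕ) (H : Finset (Finset ℕ)) : Prop :=
  ∃ I : ℕ → Finset ℕ,
    (∀ j < r, IsIntervalN (I j)) ∧
    (∀ j j', j < j' → j' < r → Precedes (I j) (I j')) ∧
    ∀ e ∈ H, (∀ x ∈ e, ∃ j < r, x ∈ I j) ∧ (∀ j < r, (e ∩ I j).card = 1)


open Classical in
lemma fk_zero {X Y : Type*} (R : X → Y → Prop) : ∀ n : ℕ, ∀ (A : Finset X) (B : Finset Y),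
    B.card ≤ n → B.card < A.card →
    ∃ J ⊆ A, J.card = (B.filter (fun y => ∀ x ∈ J, R x y)).card + 1 := by
  intro n
  induction n with
  | zero =>
    intro A B hB hAB
    have hB0 : B = ∅ := Finset.card_eq_zero.mp (by omega)
    obtain ⟨x, hx⟩ : A.Nonempty := Finset.card_pos.mp (by omega)
    exact ⟨{x}, by simpa using hx, by simp [hB0]⟩
  | succ n ih =>
    intro A B hB hAB
    by_cases h0 : ∃ x ∈ A, B.filter (fun y => R x y) = ∅
    · obtain ⟨x, hx, h⟩ := h0
      refine ⟨{x}, by simpa using hx, ?_⟩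
      simp [h]
    push Not at h0
    have key : ∃ x ∈ A, ∃ y ∈ B, R x y ∧
        (B.filter (fun y => R x y)).card < (A.filter (fun x => R x y)).card := by
      by_contra hcon
      push Not at hcon
      have h1 : (A.card : ℚ) = ∑ x ∈ A, ∑ y ∈ B,
          if R x y then (1 : ℚ) / (B.filter (fun y => R x y)).card else 0 := by
        rw [Finset.card_eq_sum_ones, Nat.cast_sum]
        refine Finset.sum_congr rfl fun x hx => ?_
        rw [← Finset.sum_filter, Finset.sum_const, nsmul_eq_mul]
        have : ((B.filter (fun y => R x y)).card : ℚ) ≠ 0 := by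
          have := Finset.card_pos.mpr (h0 x hx)
          positivity
        field_simp
        simp
      have h2 : ∑ x ∈ A, ∑ y ∈ B,
          (if R x y then (1 : ℚ) / (B.filter (fun y => R x y)).card else 0) ≤
          ∑ x ∈ A, ∑ y ∈ B,
          if R x y then (1 : ℚ) / (A.filter (fun x => R x y)).card else 0 := by
        refine Finset.sum_le_sum fun x hx => Finset.sum_le_sum fun y hy => ?_
        split_ifs with h
        · have hpos : 0 < (A.filter (fun x => R x y)).card :=
            Finset.card_pos.mpr ⟨x, by simp [hx, h]⟩
          apply one_div_le_one_div_of_le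
          · exact_mod_cast hpos
          · exact_mod_cast hcon x hx y hy h
        · exact le_rfl
      have h3 : ∑ x ∈ A, ∑ y ∈ B,
          (if R x y then (1 : ℚ) / (A.filter (fun x => R x y)).card else 0) ≤ B.card := by
        rw [Finset.sum_comm]
        have : (B.card : ℚ) = ∑ y ∈ B, 1 := by simp
        rw [this]
        refine Finset.sum_le_sum fun y hy => ?_
        rw [← Finset.sum_filter, Finset.sum_const, nsmul_eq_mul, mul_one_div]
        exact div_self_le_one _
      have : (A.card : ℚ) ≤ B.card := by linarith
      have : A.card ≤ B.card := by exact_mod_cast this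
      omega
    obtain ⟨x, hx, y, hy, hR, hlt⟩ := key
    have hyB : y ∈ B.filter (fun y => R x y) := by simp [hy, hR]
    have hxA : x ∈ A.filter (fun x => R x y) := by simp [hx, hR]
    have c1 := Finset.card_erase_of_mem hyB
    have c2 := Finset.card_erase_of_mem hxA
    have c3 : (B.filter (fun y => R x y)).card ≤ B.card := Finset.card_filter_le _ _
    have c4 : 0 < (B.filter (fun y => R x y)).card := Finset.card_pos.mpr ⟨y, hyB⟩
    obtain ⟨J, hJ, hJc⟩ := ih ((A.filter (fun x => R x y)).erase x)
      ((B.filter (fun y => R x y)).erase y) (by omega) (by omega)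
    have hxJ : x ∉ J := fun h => by simpa using hJ h
    refine ⟨insert x J, ?_, ?_⟩
    · intro z hz
      rcases Finset.mem_insert.mp hz with rfl | hz
      · exact hx
      · have := hJ hz
        simp at this
        exact this.2.1
    · have he : B.filter (fun y' => ∀ x' ∈ insert x J, R x' y') =
          insert y ((((B.filter (fun y => R x y)).erase y)).filter (fun y' => ∀ x' ∈ J, R x' y')) := by
        ext z
        simp only [Finset.mem_filter, Finset.mem_insert, Finset.mem_erase, forall_eq_or_imp]
        constructor
        · rintro ⟨h1, h2, h3⟩
          by_cases hzy : z = y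
          · left; exact hzy
          · right; exact ⟨⟨hzy, h1, h2⟩, h3⟩
        · rintro (rfl | ⟨⟨_, h1, h2⟩, h3⟩)
          · refine ⟨hy, hR, fun x' hx' => ?_⟩
            have := hJ hx'
            simp at this
            exact this.2.2
          · exact ⟨h1, h2, h3⟩
      rw [he, Finset.card_insert_of_notMem hxJ, Finset.card_insert_of_notMem (by simp), hJc]

open Classical in
lemma fk {X Y : Type*} (R : X → Y → Prop) : ∀ p : ℕ, ∀ (A : Finset X) (B : Finset Y),
    B.card + p < A.card →
    ∃ J ⊆ A, J.card = (B.filter (fun y => ∀ x ∈ J, R x y)).card + p + 1 := by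
  intro p
  induction p with
  | zero =>
    intro A B h
    exact fk_zero R _ A B le_rfl h
  | succ p ih =>
    intro A B h
    obtain ⟨x, hx⟩ : A.Nonempty := Finset.card_pos.mp (by omega)
    have c1 := Finset.card_erase_of_mem hx
    have c3 : (B.filter (fun y => R x y)).card ≤ B.card := Finset.card_filter_le _ _
    obtain ⟨J, hJ, hJc⟩ := ih (A.erase x) (B.filter (fun y => R x y)) (by omega)
    have hxJ : x ∉ J := fun h => by simpa using hJ h
    refine ⟨insert x J, ?_, ?_⟩
    · intro z hz
      rcases Finset.mem_insert.mp hz with rfl | hz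
      · exact hx
      · exact Finset.mem_of_mem_erase (hJ hz)
    · rw [Finset.card_insert_of_notMem hxJ, hJc, Finset.filter_filter]
      simp only [Finset.mem_insert, forall_eq_or_imp]
      ring

/-- agreement set -/
def agr {ι : Type*} [Fintype ι] (e f : ι → ℕ) : Finset ι := Finset.univ.filter (fun i => e i = f i)

lemma mem_agr {ι : Type*} [Fintype ι] {e f : ι → ℕ} {i : ι} : i ∈ agr e f ↔ e i = f i := by
  simp [agr]

def DeadT {ι : Type*} [Fintype ι] (A : Finset ι) (F : Finset (ι → ℕ)) : Prop :=
  ∀ e ∈ F, ∀ f ∈ F, agr e f ≠ A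

def GoodT {ι : Type*} (A : Finset ι) (F : Finset (ι → ℕ)) : Prop :=
  ∀ e ∈ F, ∀ g : ι → ℕ, ∃ f ∈ F, (∀ i ∈ A, f i = e i) ∧ ∀ i ∉ A, f i ≠ g i

lemma DeadT.mono {ι : Type*} [Fintype ι] {A : Finset ι} {F G : Finset (ι → ℕ)} (h : DeadT A F)
    (hG : G ⊆ F) : DeadT A G := fun e he f hf => h e (hG he) f (hG hf)

open Classical in
lemma split_step {ι : Type*} [Fintype ι] (𝒜 : Finset (Finset ι)) :
    ∀ N : ℕ, ∀ F : Finset (ι → ℕ), F.card ≤ N →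
    ∃ F0 ⊆ F, ∃ D : Finset ι → Finset (ι → ℕ), (∀ A, D A ⊆ F) ∧ (∀ A ∈ 𝒜, DeadT A (D A)) ∧
      (∀ A ∈ 𝒜, GoodT A F0) ∧ F.card ≤ F0.card + Fintype.card ι * ∑ A ∈ 𝒜, (D A).card := by
  intro N
  induction N with
  | zero =>
    intro F hF
    have : F = ∅ := Finset.card_eq_zero.mp (by omega)
    subst this
    refine ⟨∅, by simp, fun _ => ∅, by simp, by simp [DeadT], by simp [GoodT], by simp⟩
  | succ N ih =>
    intro F hF
    by_cases hall : ∀ A ∈ 𝒜, GoodT A F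
    · exact ⟨F, subset_rfl, fun _ => ∅, by simp, by simp [DeadT], hall, by simp⟩
    push Not at hall
    obtain ⟨A, hA, hbad⟩ := hall
    unfold GoodT at hbad
    push Not at hbad
    obtain ⟨e, he, g, hg⟩ := hbad
    set grp := F.filter (fun f => ∀ i ∈ A, f i = e i) with hgrp
    have hegrp : e ∈ grp := by simp [hgrp, he]
    have hsub : grp ⊆ F := Finset.filter_subset _ _
    have hcard : (F \ grp).card + grp.card = F.card := Finset.card_sdiff_add_card_eq_card hsub
    have hpos : 0 < grp.card := Finset.card_pos.mpr ⟨e, hegrp⟩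
    -- popular coordinate
    have hpop : ∃ i ∉ A, grp.card ≤ Fintype.card ι * (grp.filter (fun f => f i = g i)).card := by
      by_contra hcon
      push Not at hcon
      have hcov : grp ⊆ (Finset.univ \ A).biUnion (fun i => grp.filter (fun f => f i = g i)) := by
        intro f hf
        have hf' := hf
        simp only [hgrp, Finset.mem_filter] at hf'
        obtain ⟨i, hi, hfi⟩ := hg f hf'.1 hf'.2
        simp only [Finset.mem_biUnion, Finset.mem_sdiff, Finset.mem_univ, true_and, Finset.mem_filter]
        exact ⟨i, hi, hf, hfi⟩
      have h1 := (Finset.card_le_card hcov).trans Finset.card_biUnion_le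
      have hne : (Finset.univ \ A).Nonempty := by
        obtain ⟨i, hi, _⟩ := hg e he (fun _ _ => rfl)
        exact ⟨i, by simp [hi]⟩
      have h2 : Fintype.card ι * ∑ i ∈ Finset.univ \ A, (grp.filter (fun f => f i = g i)).card
          < (Finset.univ \ A).card * grp.card := by
        rw [Finset.mul_sum, ← smul_eq_mul (Finset.card _), ← Finset.sum_const]
        exact Finset.sum_lt_sum_of_nonempty hne fun i hi => hcon i (by simpa using hi)
      have h3 : (Finset.univ \ A).card ≤ Fintype.card ι := Finset.card_le_univ _
      have h4 := Nat.mul_le_mul_left (Fintype.card ι) h1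
      have h5 := Nat.mul_le_mul_right grp.card h3
      omega
    obtain ⟨i, hi, hic⟩ := hpop
    obtain ⟨F0, hF0, D, hD, hDd, hG, hc⟩ := ih (F \ grp) (by omega)
    set grp' := grp.filter (fun f => f i = g i) with hgrp'
    refine ⟨F0, hF0.trans Finset.sdiff_subset,
      fun B => if B = A then D A ∪ grp' else D B, ?_, ?_, hG, ?_⟩
    · intro B
      dsimp only
      split_ifs
      · exact Finset.union_subset ((hD A).trans Finset.sdiff_subset)
          ((Finset.filter_subset _ _).trans hsub)
      · exact (hD B).trans Finset.sdiff_subset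
    · intro B hB
      dsimp only
      split_ifs with hBA
      · subst hBA
        have hcross : ∀ a ∈ D B, ∀ b ∈ grp', agr a b ≠ B := by
          intro a ha b hb hab
          have ha' := hD B ha
          simp only [Finset.mem_sdiff, hgrp, Finset.mem_filter, not_and] at ha'
          simp only [hgrp', hgrp, Finset.mem_filter] at hb
          apply ha'.2 ha'.1
          intro j hj
          have : j ∈ agr a b := hab ▸ hj
          rw [mem_agr.mp this]
          exact hb.1.2 j hj
        have hsymm : ∀ a b : ι → ℕ, agr a b = agr b a := by
          intro a b; ext j; simp [mem_agr, eq_comm]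
        intro a ha b hb
        rcases Finset.mem_union.mp ha with ha | ha <;> rcases Finset.mem_union.mp hb with hb | hb
        · exact hDd B hB a ha b hb
        · exact hcross a ha b hb
        · rw [hsymm]; exact hcross b hb a ha
        · intro hab
          simp only [hgrp', Finset.mem_filter] at ha hb
          apply hi
          rw [← hab, mem_agr, ha.2, hb.2]
      · exact hDd B hB
    · have hdisj : Disjoint (D A) grp' := by
        rw [Finset.disjoint_left]
        intro a ha hb
        have ha' := hD A ha
        simp only [Finset.mem_sdiff] at ha'
        exact ha'.2 (Finset.mem_of_mem_filter _ hb)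
      have hsum : ∑ B ∈ 𝒜, (if B = A then D A ∪ grp' else D B).card =
          ∑ B ∈ 𝒜, (D B).card + grp'.card := by
        rw [← Finset.add_sum_erase _ _ hA, ← Finset.add_sum_erase 𝒜 (fun B => (D B).card) hA]
        rw [if_pos rfl, Finset.card_union_of_disjoint hdisj]
        rw [Finset.sum_congr rfl (g := fun B => (D B).card)]
        · ring
        · intro B hB
          rw [if_neg (Finset.ne_of_mem_erase hB)]
      rw [hsum, Nat.mul_add]
      omega

lemma card_restrict_image {ι : Type*} [Fintype ι] [DecidableEq ι] (F : Finset (ι → ℕ)) (V : ι → Finset ℕ)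
    (m : ℕ) (hV : ∀ i, (V i).card ≤ m) (hF : ∀ e ∈ F, ∀ i, e i ∈ V i) (O : Finset ι) :
    (F.image (fun e => fun i : O => e i)).card ≤ m ^ O.card := by
  have h : F.image (fun e => fun i : O => e i) ⊆ Fintype.piFinset (fun i : O => V i) := by
    intro x hx
    obtain ⟨e, he, rfl⟩ := Finset.mem_image.mp hx
    simp only [Fintype.mem_piFinset]
    intro i
    exact hF e he i
  refine (Finset.card_le_card h).trans ?_
  rw [Fintype.card_piFinset]
  refine (Finset.prod_le_pow_card Finset.univ (fun i : O => (V i).card) m fun i _ => hV i).trans ?_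
  simp

open Classical in
lemma homog_bound {ι : Type*} [Fintype ι] (ℓ m : ℕ) (hm : 1 ≤ m) (T : Finset ι) (hT : T.card ≤ ℓ)
    (V : ι → Finset ℕ) (hV : ∀ i, (V i).card ≤ m) (𝒜 : Finset (Finset ι))
    (F : Finset (ι → ℕ)) (hF : ∀ e ∈ F, ∀ i, e i ∈ V i)
    (hFT : ∀ e ∈ F, ∀ f ∈ F, ∀ i ∈ T, e i = f i)
    (hno : ∀ e ∈ F, ∀ f ∈ F, (agr e f).card ≠ ℓ)
    (hgood : ∀ A ∈ 𝒜, GoodT A F) (hdead : ∀ A ∉ 𝒜, A ≠ Finset.univ → DeadT A F) :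
    F.card ≤ m ^ (max (ℓ - T.card) (Fintype.card ι - ℓ - 1)) := by
  set J : Finset ι → Prop := fun A => A ≠ Finset.univ ∧ ∃ e ∈ F, ∃ f ∈ F, agr e f = A with hJ
  have hJgood : ∀ A, J A → GoodT A F := by
    rintro A ⟨hA, e, he, f, hf, h⟩
    by_contra hng
    have : A ∉ 𝒜 := fun h => hng (hgood A h)
    exact hdead A this hA e he f hf h
  have hJT : ∀ A, J A → T ⊆ A := by
    rintro A ⟨hA, e, he, f, hf, rfl⟩ i hi
    exact mem_agr.mpr (hFT e he f hf i hi)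
  have hJinter : ∀ A B, J A → J B → J (A ∩ B) := by
    intro A B hA hB
    refine ⟨fun h => hA.1 ?_, ?_⟩
    · rw [Finset.eq_univ_iff_forall] at h ⊢
      intro i; exact (Finset.mem_inter.mp (h i)).1
    · obtain ⟨e, he, _⟩ := hA.2
      obtain ⟨f, hf, hf1, hf2⟩ := hJgood A hA e he e
      obtain ⟨g, hg, hg1, hg2⟩ := hJgood B hB e he f
      refine ⟨f, hf, g, hg, ?_⟩
      ext i
      rw [mem_agr, Finset.mem_inter]
      constructor
      · intro h
        have hiB : i ∈ B := by
          by_contra hiB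
          exact hg2 i hiB h.symm
        refine ⟨?_, hiB⟩
        by_contra hiA
        exact hf2 i hiA (h.trans (hg1 i hiB))
      · rintro ⟨h1, h2⟩
        rw [hf1 i h1, hg1 i h2]
  -- minimal uncovered set
  have hex : ∃ O : Finset ι, (∀ B, J B → ¬ O ⊆ B) ∧
      ∀ x ∈ O, ∃ B, J B ∧ O.erase x ⊆ B := by
    have hne : (Finset.univ.filter (fun O : Finset ι => ∀ B, J B → ¬ O ⊆ B)).Nonempty := by
      refine ⟨Finset.univ, ?_⟩
      simp only [Finset.mem_filter, Finset.mem_univ, true_and]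
      intro B hB h
      exact hB.1 (Finset.univ_subset_iff.mp h)
    obtain ⟨O, hO, hmin⟩ := Finset.exists_min_image _ Finset.card hne
    simp only [Finset.mem_filter, Finset.mem_univ, true_and] at hO hmin
    refine ⟨O, hO, fun x hx => ?_⟩
    by_contra hcon
    push Not at hcon
    have := hmin (O.erase x) hcon
    have := Finset.card_erase_lt_of_mem hx
    omega
  obtain ⟨O, hO, hOmin⟩ := hex
  by_cases hcase : O.card ≤ max (ℓ - T.card) (Fintype.card ι - ℓ - 1)
  · refine le_trans ?_ (Nat.pow_le_pow_right hm hcase)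
    have hinj : Set.InjOn (fun (e : ι → ℕ) => fun i : O => e i) (F : Set (ι → ℕ)) := by
      intro e he f hf hef
      by_contra hne
      apply hO (agr e f) ⟨?_, e, he, f, hf, rfl⟩
      · intro i hi
        exact mem_agr.mpr (congrFun hef ⟨i, hi⟩)
      · intro h
        apply hne
        funext i
        exact mem_agr.mp (h ▸ Finset.mem_univ i)
    rw [← Finset.card_image_of_injOn hinj]
    exact card_restrict_image F V m hV hF O
  exfalso
  have hc1 : ℓ - T.card < O.card := by
    have := le_max_left (ℓ - T.card) (Fintype.card ι - ℓ - 1); omega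
  have hc2 : Fintype.card ι - ℓ - 1 < O.card := by
    have := le_max_right (ℓ - T.card) (Fintype.card ι - ℓ - 1); omega
  have hdisj : Disjoint O T := by
    rw [Finset.disjoint_left]
    intro x hx hxT
    obtain ⟨B, hB, hsub⟩ := hOmin x hx
    apply hO B hB
    intro z hz
    by_cases hzx : z = x
    · subst hzx; exact hJT B hB hxT
    · exact hsub (Finset.mem_erase.mpr ⟨hzx, hz⟩)
  choose! B hBJ hBsub using hOmin
  have hxB : ∀ x ∈ O, x ∉ B x := by
    intro x hx hxx
    apply hO (B x) (hBJ x hx)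
    intro z hz
    by_cases hzx : z = x
    · subst hzx; exact hxx
    · exact hBsub x hx (Finset.mem_erase.mpr ⟨hzx, hz⟩)
  have hUc : ((O ∪ T)ᶜ).card = Fintype.card ι - (O.card + T.card) := by
    rw [Finset.card_compl, Finset.card_union_of_disjoint hdisj]
  have hle : O.card + T.card ≤ Fintype.card ι := by
    rw [← Finset.card_union_of_disjoint hdisj]; exact Finset.card_le_univ _
  obtain ⟨S, hS, hSc⟩ := fk (fun x y => y ∈ B x) (O.card + T.card - ℓ - 1) O ((O ∪ T)ᶜ) (by omega)
  have hSc' : S.card = (((O ∪ T)ᶜ).filter (fun y => ∀ x ∈ S, y ∈ B x)).card +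
      (O.card + T.card - ℓ - 1) + 1 := by
    convert hSc
  have hJS : ∀ S : Finset ι, S.Nonempty → S ⊆ O → J (Finset.univ.filter (fun y => ∀ x ∈ S, y ∈ B x)) := by
    intro S hSn
    induction hSn using Finset.Nonempty.cons_induction with
    | singleton a =>
      intro h
      have : Finset.univ.filter (fun y => ∀ x ∈ ({a} : Finset ι), y ∈ B x) = B a := by
        ext; simp
      rw [this]
      exact hBJ a (h (by simp))
    | cons a s ha hs ih =>
      intro h
      have : Finset.univ.filter (fun y => ∀ x ∈ Finset.cons a s ha, y ∈ B x) =
          B a ∩ Finset.univ.filter (fun y => ∀ x ∈ s, y ∈ B x) := by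
        ext; simp
      rw [this]
      refine hJinter _ _ (hBJ a (h (by simp))) (ih ?_)
      exact fun z hz => h (by simp [hz])
  have hSn : S.Nonempty := Finset.card_pos.mp (by omega)
  have hfin := hJS S hSn hS
  have hdec : Finset.univ.filter (fun y => ∀ x ∈ S, y ∈ B x) =
      ((O \ S) ∪ T) ∪ ((O ∪ T)ᶜ).filter (fun y => ∀ x ∈ S, y ∈ B x) := by
    ext y
    simp only [Finset.mem_filter, Finset.mem_univ, true_and, Finset.mem_union, Finset.mem_sdiff,
      Finset.mem_compl]
    constructor
    · intro h
      by_cases hyO : y ∈ O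
      · left; left
        exact ⟨hyO, fun hyS => hxB y hyO (h y hyS)⟩
      · by_cases hyT : y ∈ T
        · left; right; exact hyT
        · right; exact ⟨by tauto, h⟩
    · rintro ((⟨h1, h2⟩ | h) | ⟨_, h⟩)
      · intro x hx
        apply hBsub x (hS hx)
        refine Finset.mem_erase.mpr ⟨?_, h1⟩
        rintro rfl; exact h2 hx
      · intro x hx
        exact hJT _ (hBJ x (hS hx)) h
      · exact h
  have hcard : (Finset.univ.filter (fun y => ∀ x ∈ S, y ∈ B x)).card = ℓ := by
    rw [hdec, Finset.card_union_of_disjoint, Finset.card_union_of_disjoint]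
    · have h1 := Finset.card_sdiff_add_card_eq_card hS
      clear hSc
      omega
    · exact hdisj.mono_left Finset.sdiff_subset
    · rw [Finset.disjoint_left]
      intro z hz hz'
      simp only [Finset.mem_filter, Finset.mem_compl, Finset.mem_union, Finset.mem_sdiff] at hz hz'
      tauto
  obtain ⟨_, e, he, f, hf, hef⟩ := hfin
  exact hno e he f hf (hef ▸ hcard)

def cst (R : ℕ) : ℕ → ℕ
  | 0 => 1
  | u + 1 => 1 + R * (2 ^ R * cst R u)

open Classical in
lemma ff_aux {ι : Type*} [Fintype ι] (ℓ m : ℕ) (hm : 1 ≤ m) (T : Finset ι) (hT : T.card ≤ ℓ)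
    (V : ι → Finset ℕ) (hV : ∀ i, (V i).card ≤ m) : ∀ u : ℕ, ∀ (𝒜 : Finset (Finset ι))
    (F : Finset (ι → ℕ)) (_ : 𝒜.card ≤ u) (_ : ∀ e ∈ F, ∀ i, e i ∈ V i)
    (_ : ∀ e ∈ F, ∀ f ∈ F, ∀ i ∈ T, e i = f i)
    (_ : ∀ e ∈ F, ∀ f ∈ F, (agr e f).card ≠ ℓ)
    (_ : ∀ A ∉ 𝒜, A ≠ Finset.univ → DeadT A F),
    F.card ≤ cst (Fintype.card ι) u * m ^ (max (ℓ - T.card) (Fintype.card ι - ℓ - 1)) := by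
  intro u
  induction u with
  | zero =>
    intro 𝒜 F h𝒜 h1 h2 h3 h4
    have h0 : 𝒜 = ∅ := Finset.card_eq_zero.mp (by omega)
    simp only [cst, one_mul]
    exact homog_bound ℓ m hm T hT V hV 𝒜 F h1 h2 h3 (by simp [h0]) h4
  | succ u ih =>
    intro 𝒜 F h𝒜 h1 h2 h3 h4
    obtain ⟨F0, hF0, D, hD, hDd, hG, hc⟩ := split_step 𝒜 _ F le_rfl
    have hb0 := homog_bound ℓ m hm T hT V hV 𝒜 F0 (fun e he => h1 e (hF0 he))
      (fun e he f hf => h2 e (hF0 he) f (hF0 hf)) (fun e he f hf => h3 e (hF0 he) f (hF0 hf)) hG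
      (fun A hA hA' => (h4 A hA hA').mono hF0)
    have hb1 : ∀ A ∈ 𝒜, (D A).card ≤ cst (Fintype.card ι) u *
        m ^ (max (ℓ - T.card) (Fintype.card ι - ℓ - 1)) := by
      intro A hA
      have hs := hD A
      refine ih (𝒜.erase A) (D A) ?_ (fun e he => h1 e (hs he))
        (fun e he f hf => h2 e (hs he) f (hs hf)) (fun e he f hf => h3 e (hs he) f (hs hf)) ?_
      · have := Finset.card_erase_of_mem hA
        omega
      · intro A' hA' hne
        by_cases hAA : A' = A
        · subst hAA; exact hDd _ hA
        · exact (h4 A' (fun h => hA' (Finset.mem_erase.mpr ⟨hAA, h⟩)) hne).mono hs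
    have hsum := Finset.sum_le_card_nsmul 𝒜 _ _ hb1
    have h𝒜c : 𝒜.card ≤ 2 ^ Fintype.card ι := by
      have := Finset.card_le_univ 𝒜
      simpa using this
    have hsum2 := hsum.trans (Nat.mul_le_mul_right _ h𝒜c)
    have hsum3 := Nat.mul_le_mul_left (Fintype.card ι) hsum2
    simp only [cst]
    calc F.card ≤ _ := hc
      _ ≤ _ := Nat.add_le_add hb0 hsum3
      _ = _ := by ring

lemma ff {ι : Type*} [Fintype ι] (ℓ m : ℕ) (hm : 1 ≤ m) (T : Finset ι) (hT : T.card ≤ ℓ)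
    (V : ι → Finset ℕ) (hV : ∀ i, (V i).card ≤ m)
    (F : Finset (ι → ℕ)) (h1 : ∀ e ∈ F, ∀ i, e i ∈ V i)
    (h2 : ∀ e ∈ F, ∀ f ∈ F, ∀ i ∈ T, e i = f i)
    (h3 : ∀ e ∈ F, ∀ f ∈ F, (agr e f).card ≠ ℓ) :
    F.card ≤ cst (Fintype.card ι) (2 ^ Fintype.card ι) *
      m ^ (max (ℓ - T.card) (Fintype.card ι - ℓ - 1)) := by
  classical
  refine ff_aux ℓ m hm T hT V hV _ Finset.univ F (by simp) h1 h2 h3 (by simp)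

/-- interlacing -/
def Interl {r : ℕ} (e f : Fin r → ℕ) : Prop := ∀ i j : Fin r, i < j → e i < f j ∧ f i < e j

open Classical in
lemma class_bound (r ℓ M : ℕ) (hℓ₁ : 1 ≤ ℓ) (hℓ₂ : ℓ + 1 ≤ r) (hodd : Odd ℓ) (hM : 1 ≤ M)
    (p : Fin r → ℕ) (hp : r - (ℓ + 1) / 2 ≤ (Finset.univ.image p).card)
    (F : Finset (Fin r → ℕ)) (hmono : ∀ e ∈ F, StrictMono e) (hFp : ∀ e ∈ F, ∀ i, e i / M = p i)
    (hno : ∀ e ∈ F, ∀ f ∈ F, Interl e f → (agr e f).card ≠ ℓ) :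
    F.card ≤ cst r (2 ^ r) * M ^ (max ℓ (r - (ℓ + 1) / 2)) := by
  rcases F.eq_empty_or_nonempty with rfl | ⟨e0, he0⟩
  · simp
  have hpm : Monotone p := by
    intro i j hij
    rw [← hFp e0 he0, ← hFp e0 he0]
    exact Nat.div_le_div_right ((hmono e0 he0).monotone hij)
  set T : Finset (Fin r) := Finset.univ.filter (fun i => ∃ j : Fin r, j.val + 1 = i.val ∧ p j = p i)
    with hTdef
  have hTc : (Finset.univ.image p).card + T.card ≤ r := by
    have hsub : Finset.univ.image p ⊆ (Tᶜ).image p := by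
      intro v hv
      obtain ⟨i, _, rfl⟩ := Finset.mem_image.mp hv
      have hne : (Finset.univ.filter (fun j => p j = p i)).Nonempty := ⟨i, by simp⟩
      obtain ⟨j, hj, hmin⟩ := Finset.exists_min_image _ (fun j : Fin r => j.val) hne
      simp only [Finset.mem_filter, Finset.mem_univ, true_and] at hj hmin
      refine Finset.mem_image.mpr ⟨j, ?_, hj⟩
      simp only [hTdef, Finset.mem_compl, Finset.mem_filter, Finset.mem_univ, true_and]
      rintro ⟨j', h1, h2⟩
      have := hmin j' (h2.trans hj)
      omega
    have h1 := (Finset.card_le_card hsub).trans Finset.card_image_le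
    have h2 := Finset.card_compl_add_card T
    rw [Fintype.card_fin] at h2
    omega
  obtain ⟨q, hq⟩ := hodd
  have hTl : T.card ≤ (ℓ + 1) / 2 := by omega
  have hinter : ∀ e ∈ F, ∀ f ∈ F, (∀ i ∈ T, e i = f i) → ∀ i j : Fin r, i < j → e i < f j := by
    intro e he f hf hef i j hij
    rcases (hpm hij.le).lt_or_eq with h | h
    · by_contra hcon
      push Not at hcon
      have := Nat.div_le_div_right (c := M) hcon
      rw [hFp e he, hFp f hf] at this
      omega
    · have hjT : j ∈ T := by
        simp only [hTdef, Finset.mem_filter, Finset.mem_univ, true_and]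
        have hij' : i.val < j.val := hij
        refine ⟨⟨j.val - 1, by omega⟩, by simp; omega, ?_⟩
        apply le_antisymm
        · apply hpm; rw [Fin.le_def]; simp
        · rw [← h]; apply hpm; rw [Fin.le_def]; simp; omega
      rw [← hef j hjT]
      exact hmono e he hij
  have hV : ∀ i : Fin r, (Finset.Ico (p i * M) (p i * M + M)).card ≤ M := by
    intro i; simp
  have hFV : ∀ e ∈ F, ∀ i, e i ∈ Finset.Ico (p i * M) (p i * M + M) := by
    intro e he i
    rw [Finset.mem_Ico, ← hFp e he i]
    have h1 := Nat.div_add_mod (e i) M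
    have h2 := Nat.mod_lt (e i) (show 0 < M by omega)
    rw [Nat.mul_comm] at h1
    omega
  have hfib : ∀ b ∈ F.image (fun e => fun i : T => e i),
      (F.filter (fun e => (fun i : T => e i) = b)).card ≤
      cst r (2 ^ r) * M ^ (max (ℓ - T.card) (r - ℓ - 1)) := by
    intro b _
    have hagree : ∀ e ∈ F.filter (fun e => (fun i : T => e i) = b),
        ∀ f ∈ F.filter (fun e => (fun i : T => e i) = b), ∀ i ∈ T, e i = f i := by
      intro e he f hf i hi
      have h1 := congrFun (Finset.mem_filter.mp he).2 ⟨i, hi⟩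
      have h2 := congrFun (Finset.mem_filter.mp hf).2 ⟨i, hi⟩
      exact h1.trans h2.symm
    have hff := ff ℓ M hM T (by omega) (fun i => Finset.Ico (p i * M) (p i * M + M)) hV
      (F.filter (fun e => (fun i : T => e i) = b))
      (fun e he => hFV e (Finset.mem_filter.mp he).1) hagree ?_
    · simpa using hff
    · intro e he f hf
      have hef := hagree e he f hf
      have he' := (Finset.mem_filter.mp he).1
      have hf' := (Finset.mem_filter.mp hf).1
      apply hno e he' f hf'
      intro i j hij
      exact ⟨hinter e he' f hf' hef i j hij, hinter f hf' e he' (fun i hi => (hef i hi).symm) i j hij⟩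
  have hmain := Finset.card_le_mul_card_image F _ hfib
  have himg := card_restrict_image F _ M hV hFV T
  calc F.card ≤ _ := hmain
    _ ≤ (cst r (2 ^ r) * M ^ (max (ℓ - T.card) (r - ℓ - 1))) * M ^ T.card :=
        Nat.mul_le_mul_left _ (by convert himg)
    _ = cst r (2 ^ r) * M ^ (max (ℓ - T.card) (r - ℓ - 1) + T.card) := by
        rw [mul_assoc, ← pow_add]
    _ ≤ _ := by
        apply Nat.mul_le_mul_left
        apply Nat.pow_le_pow_right hM
        rcases le_total (ℓ - T.card) (r - ℓ - 1) with h | h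
        · rw [max_eq_right h]; refine le_trans ?_ (le_max_right _ _); omega
        · rw [max_eq_left h]; refine le_trans ?_ (le_max_left _ _); omega

open Classical in
lemma pattern_count (r q N : ℕ) (hr : 1 ≤ r) (P : Finset (Fin r → ℕ))
    (hP : ∀ p ∈ P, (∀ i, p i < N) ∧ (Finset.univ.image (fun i => p i / 2)).card ≤ q) :
    P.card ≤ q ^ r * (N ^ q * 2 ^ r) := by
  have hsub : P ⊆ ((Finset.univ : Finset (Fin r → Fin q)) ×ˢ
      ((Fintype.piFinset (fun _ : Fin q => Finset.range N)) ×ˢ (Finset.univ : Finset (Fin r → Fin 2)))).image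
      (fun x => fun i => 2 * x.2.1 (x.1 i) + (x.2.2 i).val) := by
    intro p hp
    obtain ⟨h1, h2⟩ := hP p hp
    set S := Finset.univ.image (fun i => p i / 2) with hS
    have hmem : ∀ i, p i / 2 ∈ S := fun i => by simp [hS]
    have hcard : Fintype.card S ≤ Fintype.card (Fin q) := by simpa using h2
    obtain ⟨φ⟩ := Function.Embedding.nonempty_of_card_le hcard
    have : Nonempty S := ⟨⟨_, hmem ⟨0, hr⟩⟩⟩
    refine Finset.mem_image.mpr ⟨(fun i => φ ⟨_, hmem i⟩, fun j => (Function.invFun φ j).1,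
      fun i => ⟨p i % 2, Nat.mod_lt _ (by norm_num)⟩), ?_, ?_⟩
    · simp only [Finset.mem_product, Finset.mem_univ, true_and, and_true, Fintype.mem_piFinset,
        Finset.mem_range]
      intro j
      obtain ⟨i, _, hi⟩ := Finset.mem_image.mp (Function.invFun φ j).2
      rw [← hi]
      have := h1 i
      omega
    · funext i
      simp only [Function.leftInverse_invFun φ.injective _]
      omega
  refine (Finset.card_le_card hsub).trans (Finset.card_image_le.trans ?_)
  simp

open Classical in
lemma total_bound (r ℓ J : ℕ) (hℓ₁ : 1 ≤ ℓ) (hℓ₂ : ℓ + 1 ≤ r) (hodd : Odd ℓ)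
    (F : Finset (Fin r → ℕ)) (hmono : ∀ e ∈ F, StrictMono e) (hlt : ∀ e ∈ F, ∀ i, e i < 2 ^ J)
    (hno : ∀ e ∈ F, ∀ f ∈ F, Interl e f → (agr e f).card ≠ ℓ) :
    F.card ≤ 2 * (r ^ r * 2 ^ r * cst r (2 ^ r)) * (2 ^ J) ^ (max ℓ (r - (ℓ + 1) / 2)) := by
  set k := r - (ℓ + 1) / 2 with hk
  set α := max ℓ k with hα
  have hkα : k ≤ α := le_max_right _ _
  have hα1 : 1 ≤ α := hℓ₁.trans (le_max_left _ _)
  have hk1 : 1 ≤ k := by omega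
  let pat : ℕ → (Fin r → ℕ) → (Fin r → ℕ) := fun j e i => e i / 2 ^ j
  let Pr : (Fin r → ℕ) → ℕ → Prop := fun e j => k ≤ (Finset.univ.image (pat j e)).card
  let lev : (Fin r → ℕ) → ℕ := fun e => Nat.findGreatest (Pr e) J
  have hlevJ : ∀ e, lev e ≤ J := fun e => Nat.findGreatest_le J
  have hlevP : ∀ e ∈ F, Pr e (lev e) := by
    intro e he
    apply Nat.findGreatest_spec (P := Pr e) (Nat.zero_le J)
    have : pat 0 e = e := by funext i; simp [pat]
    simp only [Pr, this]
    rw [Finset.card_image_of_injective _ (hmono e he).injective]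
    simp
    omega
  have hlevS : ∀ e, lev e < J → ¬ Pr e (lev e + 1) := by
    intro e h
    exact Nat.findGreatest_is_greatest (Nat.lt_succ_self _) h
  have hpatlt : ∀ e ∈ F, ∀ i, ∀ j ≤ J, pat j e i < 2 ^ (J - j) := by
    intro e he i j hj
    simp only [pat]
    rw [Nat.div_lt_iff_lt_mul (by positivity), ← pow_add]
    rw [Nat.sub_add_cancel hj]
    exact hlt e he i
  have hlevel : ∀ j ≤ J, (F.filter (fun e => lev e = j)).card ≤
      (r ^ r * 2 ^ r * cst r (2 ^ r)) * ((2 ^ J) ^ (α - 1) * 2 ^ j) := by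
    intro j hj
    set Fj := F.filter (fun e => lev e = j) with hFj
    have hP : (Fj.image (pat j)).card ≤ r ^ r * ((2 ^ (J - j)) ^ (k - 1) * 2 ^ r) := by
      rcases hj.lt_or_eq with hlt' | heq
      · refine (pattern_count r (k - 1) (2 ^ (J - j)) (by omega) (Fj.image (pat j)) ?_).trans ?_
        · intro p hp
          obtain ⟨e, he, rfl⟩ := Finset.mem_image.mp hp
          obtain ⟨heF, hel⟩ := Finset.mem_filter.mp he
          refine ⟨fun i => hpatlt e heF i j hj, ?_⟩
          have := hlevS e (by omega)
          rw [hel] at this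
          simp only [Pr] at this
          have heq : (fun i => pat j e i / 2) = pat (j + 1) e := by
            funext i
            simp only [pat]
            rw [Nat.div_div_eq_div_mul, pow_succ]
          rw [heq]
          omega
        · gcongr
          omega
      · subst heq
        have : Fj.image (pat j) ⊆ {0} := by
          intro p hp
          obtain ⟨e, he, rfl⟩ := Finset.mem_image.mp hp
          obtain ⟨heF, hel⟩ := Finset.mem_filter.mp he
          rw [Finset.mem_singleton]
          funext i
          have := hpatlt e heF i j le_rfl
          simpa using this
        have h1 := Finset.card_le_card this
        rw [Finset.card_singleton] at h1
        refine h1.trans ?_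
        apply Nat.one_le_iff_ne_zero.mpr
        have : r ≠ 0 := by omega
        positivity
    have hfib : ∀ b ∈ Fj.image (pat j), (Fj.filter (fun e => pat j e = b)).card ≤
        cst r (2 ^ r) * (2 ^ j) ^ α := by
      intro b hb
      obtain ⟨e, he, rfl⟩ := Finset.mem_image.mp hb
      obtain ⟨heF, hel⟩ := Finset.mem_filter.mp he
      have hsub : Fj.filter (fun e' => pat j e' = pat j e) ⊆ F :=
        (Finset.filter_subset _ _).trans (Finset.filter_subset _ _)
      refine class_bound r ℓ (2 ^ j) hℓ₁ hℓ₂ hodd Nat.one_le_two_pow (pat j e) ?_ _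
        (fun f hf => hmono f (hsub hf)) ?_ (fun f hf g hg => hno f (hsub hf) g (hsub hg))
      · have := hlevP e heF
        rw [hel] at this
        exact this
      · intro f hf i
        exact congrFun (Finset.mem_filter.mp hf).2 i
    have hmain := Finset.card_le_mul_card_image Fj _ hfib
    calc Fj.card ≤ _ := hmain
      _ ≤ (cst r (2 ^ r) * (2 ^ j) ^ α) * (r ^ r * ((2 ^ (J - j)) ^ (k - 1) * 2 ^ r)) :=
          Nat.mul_le_mul_left _ hP
      _ = (r ^ r * 2 ^ r * cst r (2 ^ r)) * ((2 ^ (J - j)) ^ (k - 1) * (2 ^ j) ^ α) := by ring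
      _ ≤ _ := by
          apply Nat.mul_le_mul_left
          calc (2 ^ (J - j)) ^ (k - 1) * (2 ^ j) ^ α
              ≤ (2 ^ (J - j)) ^ (α - 1) * (2 ^ j) ^ α := by
                gcongr
                exact Nat.one_le_two_pow
            _ = (2 ^ (J - j)) ^ (α - 1) * ((2 ^ j) ^ (α - 1) * 2 ^ j) := by
                rw [← pow_succ, Nat.sub_add_cancel hα1]
            _ = _ := by
                rw [← mul_assoc, ← mul_pow, ← pow_add, Nat.sub_add_cancel hj]
  have hcover : F.card = ∑ j ∈ Finset.range (J + 1), (F.filter (fun e => lev e = j)).card := by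
    apply Finset.card_eq_sum_card_fiberwise
    intro e _
    have := hlevJ e
    simp
    omega
  have hgeo : ∑ j ∈ Finset.range (J + 1), 2 ^ j ≤ 2 * 2 ^ J := by
    have := Nat.geomSum_lt (m := 2) (n := J + 1) (s := Finset.range (J + 1)) le_rfl (by simp)
    rw [pow_succ] at this
    omega
  calc F.card = _ := hcover
    _ ≤ ∑ j ∈ Finset.range (J + 1), (r ^ r * 2 ^ r * cst r (2 ^ r)) * ((2 ^ J) ^ (α - 1) * 2 ^ j) :=
        Finset.sum_le_sum fun j hj => hlevel j (by simp at hj; omega)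
    _ = (r ^ r * 2 ^ r * cst r (2 ^ r)) * ((2 ^ J) ^ (α - 1) * ∑ j ∈ Finset.range (J + 1), 2 ^ j) := by
        rw [Finset.mul_sum, Finset.mul_sum]
    _ ≤ (r ^ r * 2 ^ r * cst r (2 ^ r)) * ((2 ^ J) ^ (α - 1) * (2 * 2 ^ J)) := by gcongr
    _ = 2 * (r ^ r * 2 ^ r * cst r (2 ^ r)) * ((2 ^ J) ^ (α - 1) * 2 ^ J) := by ring
    _ = _ := by rw [← pow_succ, Nat.sub_add_cancel hα1]

lemma image_inter_card {r : ℕ} (e f : Fin r → ℕ) (he : StrictMono e) (hef : Interl e f) :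
    (Finset.univ.image e ∩ Finset.univ.image f).card = (agr e f).card := by
  have : Finset.univ.image e ∩ Finset.univ.image f = (agr e f).image e := by
    ext x
    simp only [Finset.mem_inter, Finset.mem_image, Finset.mem_univ, true_and, mem_agr]
    constructor
    · rintro ⟨⟨i, rfl⟩, ⟨j, hj⟩⟩
      refine ⟨i, ?_, rfl⟩
      rcases lt_trichotomy i j with h | h | h
      · have := (hef i j h).1; omega
      · subst h; exact hj.symm
      · have := (hef j i h).2; omega
    · rintro ⟨i, hi, rfl⟩
      exact ⟨⟨i, rfl⟩, ⟨i, hi.symm⟩⟩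
  rw [this, Finset.card_image_of_injective _ he.injective]

lemma inter_exact {r : ℕ} (e f : Fin r → ℕ) (he : StrictMono e) (hf : StrictMono f)
    (hef : Interl e f) :
    IntervalPartiteExact r {Finset.univ.image e, Finset.univ.image f} := by
  let I : ℕ → Finset ℕ := fun j => if h : j < r then
    Finset.Icc (min (e ⟨j, h⟩) (f ⟨j, h⟩)) (max (e ⟨j, h⟩) (f ⟨j, h⟩)) else ∅
  have hI : ∀ j : Fin r, I j.val = Finset.Icc (min (e j) (f j)) (max (e j) (f j)) := by
    intro j; simp [I]
  have hIp : ∀ j j' : Fin r, j < j' → Precedes (I j) (I j') := by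
    intro j j' hjj x hx y hy
    rw [hI, Finset.mem_Icc] at hx hy
    have h1 := hef j j' hjj
    have h2 := he hjj
    have h3 := hf hjj
    omega
  have hgen : ∀ g : Fin r → ℕ, (∀ j : Fin r, g j ∈ I j.val) →
      (∀ x ∈ Finset.univ.image g, ∃ j < r, x ∈ I j) ∧
      (∀ j < r, (Finset.univ.image g ∩ I j).card = 1) := by
    intro g hg
    constructor
    · intro x hx
      obtain ⟨j, _, rfl⟩ := Finset.mem_image.mp hx
      exact ⟨j, j.2, hg j⟩
    · intro j hj
      rw [Finset.card_eq_one]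
      refine ⟨g ⟨j, hj⟩, ?_⟩
      ext x
      simp only [Finset.mem_inter, Finset.mem_image, Finset.mem_univ, true_and, Finset.mem_singleton]
      constructor
      · rintro ⟨⟨i, rfl⟩, hx⟩
        rcases lt_trichotomy i ⟨j, hj⟩ with h | h | h
        · exact absurd (hIp _ _ h _ (hg i) _ hx) (lt_irrefl _)
        · rw [h]
        · exact absurd (hIp _ _ h _ hx _ (hg i)) (lt_irrefl _)
      · rintro rfl
        exact ⟨⟨_, rfl⟩, hg ⟨j, hj⟩⟩
  refine ⟨I, ?_, ?_, ?_⟩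
  · intro j hj
    exact ⟨_, _, hI ⟨j, hj⟩⟩
  · intro j j' hjj hj'
    exact hIp ⟨j, by omega⟩ ⟨j', hj'⟩ hjj
  · intro s hs
    rcases Finset.mem_insert.mp hs with rfl | hs
    · apply hgen
      intro j; rw [hI, Finset.mem_Icc]; omega
    · rw [Finset.mem_singleton] at hs
      subst hs
      apply hgen
      intro j; rw [hI, Finset.mem_Icc]; omega

/-- Theorem 7 (ordered intersections, ℓ odd): for 1 ≤ ℓ ≤ r-1 odd and
α = max{ℓ, r - (ℓ+1)/2}, there is C > 0 such that every ordered r-graph on [n]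
with more than C·n^α edges contains two edges sharing exactly ℓ vertices that
form an interval r-partite configuration. -/
theorem ordered_intersection_odd (r ℓ : ℕ) (hr : 2 ≤ r) (hℓ₁ : 1 ≤ ℓ)
    (hℓ₂ : ℓ ≤ r - 1) (hodd : Odd ℓ) :
    ∃ C : ℝ, 0 < C ∧ ∀ n : ℕ, ∀ H : Finset (Finset ℕ),
      (∀ e ∈ H, e ⊆ Finset.Icc 1 n ∧ e.card = r) →
      C * (n : ℝ) ^ (max ℓ (r - (ℓ + 1) / 2)) < (H.card : ℝ) →
      ∃ e ∈ H, ∃ f ∈ H, (e ∩ f).card = ℓ ∧ IntervalPartiteExact r {e, f} := by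
  classical
  set α := max ℓ (r - (ℓ + 1) / 2) with hα
  set K := 2 * (r ^ r * 2 ^ r * cst r (2 ^ r)) * 2 ^ α with hK
  refine ⟨(K : ℝ) + 1, by positivity, ?_⟩
  intro n H hH hbig
  by_contra hcon
  have hn : n ≠ 0 := by
    rintro rfl
    have hH0 : H = ∅ := by
      rw [Finset.eq_empty_iff_forall_notMem]
      intro e he
      obtain ⟨h1, h2⟩ := hH e he
      have : e = ∅ := by simpa using h1
      rw [this] at h2
      simp at h2
      omega
    rw [hH0] at hbig
    simp only [Finset.card_empty, Nat.cast_zero] at hbig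
    have : (0 : ℝ) ≤ ((K : ℝ) + 1) * 0 ^ α := by positivity
    linarith
  let F : Finset (Fin r → ℕ) := (Fintype.piFinset (fun _ => Finset.Icc 1 n)).filter
    (fun g => StrictMono g ∧ Finset.univ.image g ∈ H)
  have hHF : H ⊆ F.image (fun g => Finset.univ.image g) := by
    intro e he
    obtain ⟨h1, h2⟩ := hH e he
    have himg : Finset.univ.image (e.orderEmbOfFin h2) = e := by
      apply Finset.coe_injective
      simp
    refine Finset.mem_image.mpr ⟨e.orderEmbOfFin h2, ?_, himg⟩
    simp only [F, Finset.mem_filter, Fintype.mem_piFinset]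
    refine ⟨fun i => h1 (Finset.orderEmbOfFin_mem e h2 i), (e.orderEmbOfFin h2).strictMono, ?_⟩
    rw [himg]; exact he
  have hHc : H.card ≤ F.card := (Finset.card_le_card hHF).trans Finset.card_image_le
  have hb := total_bound r ℓ (Nat.log 2 n + 1) hℓ₁ (by omega) hodd F
    (fun e he => (Finset.mem_filter.mp he).2.1) ?_ ?_
  · have hpow : 2 ^ (Nat.log 2 n + 1) ≤ 2 * n := by
      rw [pow_succ]
      have := Nat.pow_log_le_self 2 hn
      omega
    have hb2 : H.card ≤ K * n ^ α := by
      calc H.card ≤ _ := hHc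
        _ ≤ _ := hb
        _ ≤ 2 * (r ^ r * 2 ^ r * cst r (2 ^ r)) * (2 * n) ^ α := by gcongr
        _ = K * n ^ α := by rw [hK, mul_pow]; ring
    have hb3 : (H.card : ℝ) ≤ K * (n : ℝ) ^ α := by exact_mod_cast hb2
    have : (0 : ℝ) ≤ (n : ℝ) ^ α := by positivity
    nlinarith
  · intro e he i
    have h1 := Fintype.mem_piFinset.mp (Finset.mem_filter.mp he).1 i
    rw [Finset.mem_Icc] at h1
    exact h1.2.trans_lt (Nat.lt_pow_succ_log_self (by norm_num) n)
  · intro e he f hf hef hc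
    obtain ⟨_, he1, he2⟩ := Finset.mem_filter.mp he
    obtain ⟨_, hf1, hf2⟩ := Finset.mem_filter.mp hf
    exact hcon ⟨_, he2, _, hf2, (image_inter_card e f he1 hef).trans hc, inter_exact e f he1 hf1 hef⟩
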